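/- arXiv:2001.03132 — 8 statements merged into one kernel-verified Lean document; each statement's English description precedes it below -/
import Mathlib

section
/- Let b, c, d be real numbers with b > −c and 0 ≤ c ≤ d. Define φ : ℝ → ℝ by φ(Z) = (b·Z − c·d)/(Z + b + c + d) if Z > −c, and φ(Z) = Z if Z ≤ −c. Then φ is strictly increasing on ℝ. -/
theorem stmt8 (b c d : ℝ) (hb : -c < b) (hc : 0 ≤ c) (hcd : c ≤ d) :
    StrictMono (fun Z : ℝ => if -c < Z then (b * Z - c * d) / (Z + b + c + d) else Z) := by
  intro x y hxy
  have h1 : 0 < b + c := by linarith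
  have h2 : 0 < b + d := by linarith
  show (if -c < x then (b * x - c * d) / (x + b + c + d) else x) <
    (if -c < y then (b * y - c * d) / (y + b + c + d) else y)
  by_cases hx : -c < x
  · have hy : -c < y := hx.trans hxy
    rw [if_pos hx, if_pos hy, div_lt_div_iff₀ (by linarith) (by linarith)]
    have := mul_pos (mul_pos h1 h2) (sub_pos.2 hxy)
    linarith
  · rw [if_neg hx]
    by_cases hy : -c < y
    · rw [if_pos hy]
      have hx' : x ≤ -c := not_lt.1 hx
      refine lt_of_le_of_lt hx' ?_
      rw [lt_div_iff₀ (by linarith)]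
      have : 0 < (b + c) * (y + c) := mul_pos h1 (by linarith)
      linarith
    · rw [if_neg hy]; exact hxy
end

section
/- Let β ≥ 0, let f : ℝ≥0 → ℝ≥0 be strictly increasing with f(0) = 0, and let n, s be naturals with n − s ≥ 4. Then the function m ↦ A(n,m,s) on the real interval [0, (n−s)/2] is strictly increasing if T(n,s) > β, strictly decreasing if T(n,s) < β, and constant if T(n,s) = β. -/
open scoped NNReal

noncomputable section

/-- T(n,s) = (n−s−3)·f(n−s−1) − (n−s−2)·f(n−s−2). -/
def Tval (f : ℝ≥0 → ℝ≥0) (n s : ℕ) : ℝ :=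
  ((n : ℝ) - s - 3) * ((f ((n - s - 1 : ℕ) : ℝ≥0) : ℝ≥0) : ℝ)
    - ((n : ℝ) - s - 2) * ((f ((n - s - 2 : ℕ) : ℝ≥0) : ℝ≥0) : ℝ)

/-- D₁ = f(n−s−1)+β. -/
def D1val (β : ℝ) (f : ℝ≥0 → ℝ≥0) (n s : ℕ) : ℝ :=
  ((f ((n - s - 1 : ℕ) : ℝ≥0) : ℝ≥0) : ℝ) + β

/-- D₂ = f(n−s−2)+β. -/
def D2val (β : ℝ) (f : ℝ≥0 → ℝ≥0) (n s : ℕ) : ℝ :=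
  ((f ((n - s - 2 : ℕ) : ℝ≥0) : ℝ≥0) : ℝ) + β

/-- A(n,m,s), with `m` a real variable. -/
def Aval (β : ℝ) (f : ℝ≥0 → ℝ≥0) (n : ℕ) (m : ℝ) (s : ℕ) : ℝ :=
  (D1val β f n s * D2val β f n s / (3 * D1val β f n s - 2 * D2val β f n s)) *
      (3 * (β - Tval f n s) /
          (m * (3 * D1val β f n s - 2 * D2val β f n s) + ((n : ℝ) - s) * D2val β f n s) - 1)
    + β

/-- B(s) = β/s − ((s−1)/s)·f(1). -/
def Bval (β : ℝ) (f : ℝ≥0 → ℝ≥0) (s : ℕ) : ℝ :=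
  β / (s : ℝ) - (((s : ℝ) - 1) / (s : ℝ)) * ((f 1 : ℝ≥0) : ℝ)

/-- Q(n,m,s). -/
def Qval (β : ℝ) (f : ℝ≥0 → ℝ≥0) (n : ℕ) (m : ℝ) (s : ℕ) : ℝ :=
  if Aval β f n m s > -((f 1 : ℝ≥0) : ℝ) then
    (Aval β f n m s * Bval β f s - ((f 1 : ℝ≥0) : ℝ) * ((f ((n - s : ℕ) : ℝ≥0) : ℝ≥0) : ℝ)) /
      (Aval β f n m s + Bval β f s + ((f 1 : ℝ≥0) : ℝ) + ((f ((n - s : ℕ) : ℝ≥0) : ℝ≥0) : ℝ))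
  else Aval β f n m s

theorem stmt9 (β : ℝ) (hβ : 0 ≤ β)
    (f : ℝ≥0 → ℝ≥0) (hf : StrictMono f) (hf0 : f 0 = 0)
    (n s : ℕ) (hns : s + 4 ≤ n) :
    (Tval f n s > β →
      StrictMonoOn (fun m : ℝ => Aval β f n m s) (Set.Icc 0 (((n : ℝ) - s) / 2))) ∧
    (Tval f n s < β →
      StrictAntiOn (fun m : ℝ => Aval β f n m s) (Set.Icc 0 (((n : ℝ) - s) / 2))) ∧
    (Tval f n s = β →
      ∀ m₁ ∈ Set.Icc (0 : ℝ) (((n : ℝ) - s) / 2), ∀ m₂ ∈ Set.Icc (0 : ℝ) (((n : ℝ) - s) / 2),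
        Aval β f n m₁ s = Aval β f n m₂ s) := by
  have hN : (4 : ℝ) ≤ (n : ℝ) - s := by
    have : ((s + 4 : ℕ) : ℝ) ≤ n := by exact_mod_cast hns
    push_cast at this
    linarith
  have h2 : 0 < D2val β f n s := by
    have h : f 0 < f ((n - s - 2 : ℕ) : ℝ≥0) := hf (by
      have : 0 < n - s - 2 := by omega
      exact_mod_cast this)
    rw [hf0] at h
    have h' : (0 : ℝ) < ((f ((n - s - 2 : ℕ) : ℝ≥0) : ℝ≥0) : ℝ) := by exact_mod_cast h
    unfold D2val
    linarith
  have h12 : D2val β f n s < D1val β f n s := by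
    have h : f ((n - s - 2 : ℕ) : ℝ≥0) < f ((n - s - 1 : ℕ) : ℝ≥0) := hf (by
      have : n - s - 2 < n - s - 1 := by omega
      exact_mod_cast this)
    have h' : ((f ((n - s - 2 : ℕ) : ℝ≥0) : ℝ≥0) : ℝ) < ((f ((n - s - 1 : ℕ) : ℝ≥0) : ℝ≥0) : ℝ) := by
      exact_mod_cast h
    unfold D2val D1val
    linarith
  unfold Aval
  generalize D1val β f n s = a at *
  generalize D2val β f n s = b at *
  generalize Tval f n s = T at *
  generalize (n : ℝ) - s = N at *
  have hE : 0 < 3 * a - 2 * b := by linarith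
  have hK : 0 < a * b / (3 * a - 2 * b) := div_pos (mul_pos (by linarith) h2) hE
  generalize 3 * a - 2 * b = E at *
  generalize a * b / E = K at *
  have hc : 0 < N * b := mul_pos (by linarith) h2
  have key : ∀ x y : ℝ, 0 ≤ x → x < y → 1 / (y * E + N * b) < 1 / (x * E + N * b) := by
    intro x y hx hxy
    have h0 : 0 ≤ x * E := mul_nonneg hx hE.le
    have h1 : x * E < y * E := mul_lt_mul_of_pos_right hxy hE
    exact one_div_lt_one_div_of_lt (by linarith) (by linarith)
  refine ⟨?_, ?_, ?_⟩
  · intro hT x hx y hy hxy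
    have h := key x y hx.1 hxy
    have h3 : 3 * (β - T) < 0 := by linarith
    have h4 := mul_lt_mul_of_neg_left h h3
    rw [mul_one_div, mul_one_div] at h4
    have h5 := mul_lt_mul_of_pos_left h4 hK
    show K * _ + β < K * _ + β
    linarith
  · intro hT x hx y hy hxy
    have h := key x y hx.1 hxy
    have h3 : 0 < 3 * (β - T) := by linarith
    have h4 := mul_lt_mul_of_pos_left h h3
    rw [mul_one_div, mul_one_div] at h4
    have h5 := mul_lt_mul_of_pos_left h4 hK
    show K * _ + β < K * _ + β
    linarith
  · intro hT x _ y _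
    simp [hT]
end
end

section
/- Let β ≥ 0, let f : ℝ≥0 → ℝ≥0 be strictly increasing with f(0) = 0, and let n, s be naturals with 1 ≤ s ≤ n−4. If T(n,s) < β, then m ↦ Q(n,m,s) is strictly decreasing on the real interval [0,(n−s)/2], so Q(n,·,s) is minimized at m = (n−s)/2; if T(n,s) > β, then m ↦ Q(n,m,s) is strictly increasing on [0,(n−s)/2], so Q(n,·,s) is minimized at m = 0; and if T(n,s) = β, then Q(n,·,s) is constant. -/
open scoped NNReal

noncomputable section

/-- Strict monotonicity of the outer function `A ↦ Q`. -/
theorem outer_strictMono (B c F : ℝ) (h1 : 0 < B + c) (h2 : c < F) :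
    StrictMono (fun x : ℝ => if x > -c then (x * B - c * F) / (x + B + c + F) else x) := by
  have hBF : 0 < B + F := by linarith
  have key : ∀ x : ℝ, -c < x → -c < (x * B - c * F) / (x + B + c + F) := by
    intro x hx
    rw [lt_div_iff₀ (by linarith)]
    nlinarith [mul_pos h1 (show 0 < x + c by linarith)]
  intro x y hxy
  by_cases hx : x > -c
  · have hy : y > -c := by linarith
    simp only [hx, hy, if_true]
    rw [div_lt_div_iff₀ (by linarith) (by linarith)]
    nlinarith [mul_pos (mul_pos h1 hBF) (sub_pos.2 hxy)]
  · by_cases hy : y > -c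
    · simp only [hx, hy, if_true, if_false]
      have := key y hy
      linarith
    · simp only [hx, hy, if_false]
      exact hxy

/-- Comparison of the values of `A`. -/
theorem inner_lt (P E K t β m₁ m₂ : ℝ) (hP : 0 < P) (hE : 0 < E) (hK : 0 < K) (ht : 0 < t)
    (h0 : 0 ≤ m₁) (h : m₁ < m₂) :
    P * (t / (m₂ * E + K) - 1) + β < P * (t / (m₁ * E + K) - 1) + β := by
  have h1 : 0 < m₁ * E + K := by positivity
  have h2 : m₁ * E + K < m₂ * E + K := by nlinarith
  have h3 := div_lt_div_of_pos_left ht h1 h2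
  nlinarith

theorem stmt10 (β : ℝ) (hβ : 0 ≤ β)
    (f : ℝ≥0 → ℝ≥0) (hf : StrictMono f) (hf0 : f 0 = 0)
    (n s : ℕ) (hs1 : 1 ≤ s) (hns : s + 4 ≤ n) :
    (Tval f n s < β →
      StrictAntiOn (fun m : ℝ => Qval β f n m s) (Set.Icc 0 (((n : ℝ) - s) / 2)) ∧
      ∀ m ∈ Set.Icc (0 : ℝ) (((n : ℝ) - s) / 2),
        Qval β f n (((n : ℝ) - s) / 2) s ≤ Qval β f n m s) ∧
    (Tval f n s > β →
      StrictMonoOn (fun m : ℝ => Qval β f n m s) (Set.Icc 0 (((n : ℝ) - s) / 2)) ∧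
      ∀ m ∈ Set.Icc (0 : ℝ) (((n : ℝ) - s) / 2),
        Qval β f n 0 s ≤ Qval β f n m s) ∧
    (Tval f n s = β →
      ∀ m₁ ∈ Set.Icc (0 : ℝ) (((n : ℝ) - s) / 2), ∀ m₂ ∈ Set.Icc (0 : ℝ) (((n : ℝ) - s) / 2),
        Qval β f n m₁ s = Qval β f n m₂ s) := by
  have hm : ∀ {a b : ℝ≥0}, a < b → ((f a : ℝ≥0) : ℝ) < ((f b : ℝ≥0) : ℝ) :=
    fun h => by exact_mod_cast hf h
  have hc : (0 : ℝ) < ((f 1 : ℝ≥0) : ℝ) := by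
    have := hm (show (0 : ℝ≥0) < 1 by norm_num)
    rwa [hf0] at this
  have hb : ((f 1 : ℝ≥0) : ℝ) < ((f ((n - s - 2 : ℕ) : ℝ≥0) : ℝ≥0) : ℝ) :=
    hm (by exact_mod_cast (show 1 < n - s - 2 by omega))
  have hab : ((f ((n - s - 2 : ℕ) : ℝ≥0) : ℝ≥0) : ℝ) < ((f ((n - s - 1 : ℕ) : ℝ≥0) : ℝ≥0) : ℝ) :=
    hm (by exact_mod_cast (show n - s - 2 < n - s - 1 by omega))
  have hF : ((f 1 : ℝ≥0) : ℝ) < ((f ((n - s : ℕ) : ℝ≥0) : ℝ≥0) : ℝ) :=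
    hm (by exact_mod_cast (show 1 < n - s by omega))
  have hk : (0 : ℝ) < (n : ℝ) - s := by
    have : (s : ℝ) + 4 ≤ n := by exact_mod_cast hns
    linarith
  have hs : (0 : ℝ) < s := by exact_mod_cast hs1
  have hB : 0 < Bval β f s + ((f 1 : ℝ≥0) : ℝ) := by
    have : Bval β f s + ((f 1 : ℝ≥0) : ℝ) = (β + ((f 1 : ℝ≥0) : ℝ)) / s := by
      unfold Bval
      field_simp
      ring
    rw [this]
    positivity
  have hD2 : 0 < D2val β f n s := by unfold D2val; linarith
  have hD12 : D2val β f n s < D1val β f n s := by unfold D2val D1val; linarith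
  have hD1 : 0 < D1val β f n s := hD2.trans hD12
  have hE : 0 < 3 * D1val β f n s - 2 * D2val β f n s := by linarith
  have hP := div_pos (mul_pos hD1 hD2) hE
  have hK := mul_pos hk hD2
  have hQ := outer_strictMono _ _ _ hB hF
  have hanti : Tval f n s < β →
      StrictAntiOn (fun m : ℝ => Qval β f n m s) (Set.Icc 0 (((n : ℝ) - s) / 2)) := by
    intro hT x hx y _ hxy
    apply hQ
    exact inner_lt _ _ _ _ β x y hP hE hK (by linarith) hx.1 hxy
  have hmono : Tval f n s > β →
      StrictMonoOn (fun m : ℝ => Qval β f n m s) (Set.Icc 0 (((n : ℝ) - s) / 2)) := by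
    intro hT x hx y _ hxy
    apply hQ
    have := inner_lt _ _ _ (-(3 * (β - Tval f n s))) β x y hP hE hK (by linarith) hx.1 hxy
    rw [neg_div, neg_div] at this
    unfold Aval
    linarith
  refine ⟨fun hT => ⟨hanti hT, fun m h => ?_⟩, fun hT => ⟨hmono hT, fun m h => ?_⟩, ?_⟩
  · exact (hanti hT).antitoneOn h ⟨by linarith, le_rfl⟩ h.2
  · exact (hmono hT).monotoneOn ⟨le_rfl, by linarith⟩ h h.1
  · intro hT m₁ _ m₂ _
    simp [Qval, Aval, hT]
end
end

section
/- Let β ≥ 0, let f : ℝ≥0 → ℝ≥0 be strictly increasing with f(0) = 0, let n, s, m be naturals with m ≥ 1 and n − s − 2m ≥ 1, and let λ_S ∈ [0,1]. Set ρ = (n−s−2m)(f(n−s−2)+β) / ( 3m(f(n−s−1)+β) + (n−s−2m)(f(n−s−2)+β) ) and λ_R = ρ. Then L^R(n,m,s) = L^M(n,m,s), where L^R(n,m,s) = (1−λ_S)·( λ_R·( (3/(n−s−2m))·β − (1 − 3/(n−s−2m))·f(n−s−1) ) − (1−λ_R)·f(n−s−2) ) − λ_S·f(n−s) and L^M(n,m,s)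 = (1−λ_S)·( (1−λ_R)·( (1/m)·β − (1 − 1/m)·f(n−s−2) ) − λ_R·f(n−s−1) ) − λ_S·f(n−s). Moreover ρ ∈ [0,1]. -/
open scoped NNReal

theorem stmt11 (β : ℝ) (hβ : 0 ≤ β)
    (f : ℝ≥0 → ℝ≥0) (hf : StrictMono f) (hf0 : f 0 = 0)
    (n s m : ℕ) (hm : 1 ≤ m) (hnsm : s + 2 * m + 1 ≤ n)
    (lS : ℝ) (hlS : lS ∈ Set.Icc (0 : ℝ) 1)
    (u f1 f2 fns ρ LR LM : ℝ)
    (hu : u = (n : ℝ) - s - 2 * m)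
    (hf1 : f1 = ((f ((n - s - 1 : ℕ) : ℝ≥0) : ℝ≥0) : ℝ))
    (hf2 : f2 = ((f ((n - s - 2 : ℕ) : ℝ≥0) : ℝ≥0) : ℝ))
    (hfns : fns = ((f ((n - s : ℕ) : ℝ≥0) : ℝ≥0) : ℝ))
    (hρ : ρ = u * (f2 + β) / (3 * m * (f1 + β) + u * (f2 + β)))
    (hLR : LR = (1 - lS) * (ρ * ((3 / u) * β - (1 - 3 / u) * f1) - (1 - ρ) * f2) - lS * fns)
    (hLM : LM = (1 - lS) * ((1 - ρ) * ((1 / (m : ℝ)) * β - (1 - 1 / (m : ℝ)) * f2) - ρ * f1)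
      - lS * fns) :
    LR = LM ∧ ρ ∈ Set.Icc (0 : ℝ) 1 := by
  have hu0 : 0 < u := by
    have h : ((s + 2 * m + 1 : ℕ) : ℝ) ≤ n := by exact_mod_cast hnsm
    push_cast at h
    linarith
  have hm0 : (0 : ℝ) < m := by exact_mod_cast hm
  have hpos : ∀ k : ℕ, 0 < k → (0 : ℝ) < ((f (k : ℝ≥0) : ℝ≥0) : ℝ) := by
    intro k hk
    have h : f 0 < f (k : ℝ≥0) := hf (by exact_mod_cast hk)
    rw [hf0] at h
    exact_mod_cast h
  have h1 : 0 < f1 := hf1 ▸ hpos _ (by omega)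
  have h2 : 0 < f2 := hf2 ▸ hpos _ (by omega)
  have hA : 0 < f1 + β := by linarith
  have hB : 0 < f2 + β := by linarith
  have hP : 0 < 3 * (m : ℝ) * (f1 + β) := by positivity
  have hQ : 0 < u * (f2 + β) := by positivity
  have hD : 0 < 3 * (m : ℝ) * (f1 + β) + u * (f2 + β) := by linarith
  have key : ρ * (3 / u) * (f1 + β) = (1 - ρ) * (1 / (m : ℝ)) * (f2 + β) := by
    have e : ρ * (3 * (m : ℝ) * (f1 + β) + u * (f2 + β)) = u * (f2 + β) := by
      rw [hρ]; exact div_mul_cancel₀ _ hD.ne'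
    field_simp
    linarith
  refine ⟨?_, ?_, ?_⟩
  · rw [hLR, hLM]
    linear_combination (1 - lS) * key
  · rw [hρ]; positivity
  · rw [hρ, div_le_one hD]; linarith
end

section
/- Let H be a finite simple graph with vertex set V of size u ≥ 1, and define weights w : V → ℝ by w(i) = (l_i(H)+1)/u if the degree of i is ≠ 1, w(i) = 1/u if i is a leaf lying in a connected component of size exactly 2, and w(i) = 0 otherwise. Then for every vertex i ∈ V ∖ (S(H) ∪ SL(H) ∪ D(H)), the total weight of the closed neighbourhood of i satisfies Σ_{j ∈ N_H[i]} w(j) ≥ 3/u. -/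
open Classical in
theorem stmt14 {V : Type*} [Fintype V] (H : SimpleGraph V)
    (u : ℕ) (hu : u = Fintype.card V) (hu1 : 1 ≤ u)
    (w : V → ℝ)
    (hw : ∀ i : V, w i =
      if (H.neighborSet i).ncard ≠ 1 then
        (((H.neighborSet i ∩ {x : V | (H.neighborSet x).ncard = 1}).ncard : ℝ) + 1) / u
      else if (H.connectedComponentMk i).supp.ncard = 2 then 1 / (u : ℝ)
      else 0) :
    ∀ i : V,
      i ∉ ({v : V | (H.neighborSet v).ncard = 0}
            ∪ {v : V | (H.neighborSet v).ncard = 1 ∧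
                (H.neighborSet v ∩
                  {j : V | (H.neighborSet j ∩ {x : V | (H.neighborSet x).ncard = 1}).ncard = 1}).Nonempty}
            ∪ {v : V | (H.connectedComponentMk v).supp.ncard = 2}) →
      3 / (u : ℝ) ≤ ∑ j : V, (if j = i ∨ H.Adj i j then w j else 0) := by
  intro i hi
  have hup : (0 : ℝ) < u := by exact_mod_cast hu1
  have hw0 : ∀ j, 0 ≤ w j := by
    intro j
    rw [hw j]
    split_ifs <;> positivity
  simp only [Set.mem_union, Set.mem_ofPred_eq, not_or, not_and] at hi
  obtain ⟨⟨h0, h1⟩, -⟩ := hi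
  rw [← Finset.sum_filter]
  by_cases hd : (H.neighborSet i).ncard = 1
  · obtain ⟨j, hj⟩ := Set.ncard_eq_one.mp hd
    have hij : H.Adj i j := by
      have : j ∈ H.neighborSet i := by rw [hj]; rfl
      exact this
    have hl1 : (H.neighborSet j ∩ {x : V | (H.neighborSet x).ncard = 1}).ncard ≠ 1 :=
      fun h => h1 hd ⟨j, hij, h⟩
    have hl0 : 0 < (H.neighborSet j ∩ {x : V | (H.neighborSet x).ncard = 1}).ncard :=
      (Set.ncard_pos (Set.toFinite _)).mpr ⟨i, hij.symm, hd⟩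
    have hle : (H.neighborSet j ∩ {x : V | (H.neighborSet x).ncard = 1}).ncard
        ≤ (H.neighborSet j).ncard := Set.ncard_le_ncard Set.inter_subset_left (Set.toFinite _)
    have hwj : 3 / (u : ℝ) ≤ w j := by
      rw [hw j, if_pos (by omega)]
      have : (2 : ℝ) ≤ ((H.neighborSet j ∩ {x : V | (H.neighborSet x).ncard = 1}).ncard : ℝ) := by
        have : 2 ≤ (H.neighborSet j ∩ {x : V | (H.neighborSet x).ncard = 1}).ncard := by omega
        exact_mod_cast this
      gcongr
      linarith
    refine hwj.trans (Finset.single_le_sum (f := w) (fun k _ => hw0 k) ?_)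
    simp [hij]
  · have hsub : insert i (H.neighborSet i \ {x : V | (H.neighborSet x).ncard = 1}).toFinset
        ⊆ Finset.univ.filter (fun j => j = i ∨ H.Adj i j) := by
      intro k hk
      simp only [Finset.mem_insert, Set.mem_toFinset, Set.mem_sdiff,
        SimpleGraph.mem_neighborSet] at hk
      simp only [Finset.mem_filter, Finset.mem_univ, true_and]
      tauto
    refine le_trans ?_ (Finset.sum_le_sum_of_subset_of_nonneg hsub (fun k _ _ => hw0 k))
    rw [Finset.sum_insert (by simp)]
    have hs : (H.neighborSet i \ {x : V | (H.neighborSet x).ncard = 1}).toFinset.card • (1 / (u : ℝ))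
        ≤ ∑ k ∈ (H.neighborSet i \ {x : V | (H.neighborSet x).ncard = 1}).toFinset, w k := by
      apply Finset.card_nsmul_le_sum
      intro k hk
      rw [Set.mem_toFinset] at hk
      have hk2 : (H.neighborSet k).ncard ≠ 1 := hk.2
      rw [hw k, if_pos hk2]
      gcongr
      simp
    rw [← Set.ncard_eq_toFinset_card', nsmul_eq_mul] at hs
    have hc := Set.ncard_inter_add_ncard_sdiff_eq_ncard (H.neighborSet i)
      {x : V | (H.neighborSet x).ncard = 1} (Set.toFinite _)
    have h2 : (2 : ℝ) ≤ ((H.neighborSet i ∩ {x : V | (H.neighborSet x).ncard = 1}).ncard : ℝ)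
        + ((H.neighborSet i \ {x : V | (H.neighborSet x).ncard = 1}).ncard : ℝ) := by
      have : 2 ≤ (H.neighborSet i ∩ {x : V | (H.neighborSet x).ncard = 1}).ncard
        + (H.neighborSet i \ {x : V | (H.neighborSet x).ncard = 1}).ncard := by omega
      exact_mod_cast this
    refine le_trans ?_ (add_le_add_right hs _)
    rw [hw i, if_pos hd, mul_one_div, ← add_div]
    gcongr
    linarith
end

section
/- Let f : ℝ≥0 → ℝ≥0 be strictly increasing and concave with f(0) = 0. Then for every natural n ≥ 4 and every natural s with 0 ≤ s ≤ n−4, T(n,s) < 0; in particular T(n,s) < β for every β ≥ 0. -/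
open scoped NNReal

noncomputable section

theorem stmt16 (f : ℝ≥0 → ℝ≥0) (hf : StrictMono f) (hf0 : f 0 = 0)
    (hconc : ConcaveOn ℝ≥0 Set.univ f)
    (n : ℕ) (hn : 4 ≤ n) (s : ℕ) (hs : s + 4 ≤ n) :
    Tval f n s < 0 ∧ ∀ β : ℝ, 0 ≤ β → Tval f n s < β := by
  have key : Tval f n s < 0 := by
    obtain ⟨k, rfl⟩ := Nat.exists_eq_add_of_le hs
    have e1 : s + 4 + k - s - 1 = k + 3 := by omega
    have e2 : s + 4 + k - s - 2 = k + 2 := by omega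
    unfold Tval
    rw [e1, e2]
    have hpos : (0 : ℝ≥0) < f ((k + 3 : ℕ) : ℝ≥0) := by
      rw [← hf0]
      apply hf
      positivity
    have hne : ((k : ℝ≥0) + 3) ≠ 0 := by positivity
    have hsum : ((k : ℝ≥0) + 2) / (k + 3) + 1 / (k + 3) = 1 := by
      field_simp
      ring
    have h := hconc.2 (Set.mem_univ ((k + 3 : ℕ) : ℝ≥0)) (Set.mem_univ (0 : ℝ≥0))
      (zero_le : 0 ≤ ((k : ℝ≥0) + 2) / (k + 3)) (zero_le : 0 ≤ (1 : ℝ≥0) / (k + 3)) hsum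
    have e3 : ((k : ℝ≥0) + 2) / (k + 3) * ((k + 3 : ℕ) : ℝ≥0) = ((k + 2 : ℕ) : ℝ≥0) := by
      push_cast
      field_simp
    simp only [smul_eq_mul, hf0, mul_zero, add_zero, e3] at h
    have h2 : (((k : ℝ) + 2) / (k + 3)) * (f ((k + 3 : ℕ) : ℝ≥0) : ℝ)
        ≤ (f ((k + 2 : ℕ) : ℝ≥0) : ℝ) := by exact_mod_cast h
    have hpos' : (0 : ℝ) < (f ((k + 3 : ℕ) : ℝ≥0) : ℝ) := by exact_mod_cast hpos
    generalize (f ((k + 3 : ℕ) : ℝ≥0) : ℝ) = a at *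
    generalize (f ((k + 2 : ℕ) : ℝ≥0) : ℝ) = b at *
    have hk : (0 : ℝ) ≤ k := Nat.cast_nonneg k
    rw [div_mul_eq_mul_div, div_le_iff₀ (by positivity)] at h2
    push_cast
    have h3 : ((k : ℝ) + 1) * a < (k + 2) * b := by
      have h4 := mul_le_mul_of_nonneg_left h2 (by positivity : (0 : ℝ) ≤ k + 2)
      by_contra hc
      push Not at hc
      have h5 := mul_le_mul_of_nonneg_right hc (by positivity : (0 : ℝ) ≤ k + 3)
      nlinarith
    nlinarith
  exact ⟨key, fun β hβ => lt_of_lt_of_le key hβ⟩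
end
end

section
/- Let β ≥ 0, let f : ℝ≥0 → ℝ≥0 be strictly increasing with f(0) = 0, and let n, s be naturals with n − s ≥ 5 and n − s odd. Define X(n,s) = 2β/(n−s−1) − (1 − 2/(n−s−1))·f(n−s−2). Then X(n,s) − A(n,(n−s−3)/2,s) = 2·(f(n−s−1) − f(n−s−2))·(f(n−s−2)+β)·(n−s−3) / ( (n−s−1)·( f(n−s−1)·(n−s−3) + 2·f(n−s−2) + β·(n−s−1) ) ); in particular X(n,s) > A(n,(n−s−3)/2,s). -/
open scoped NNReal

noncomputable section

theorem stmt18 (β : ℝ) (hβ : 0 ≤ β)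
    (f : ℝ≥0 → ℝ≥0) (hf : StrictMono f) (hf0 : f 0 = 0)
    (n s : ℕ) (h5 : s + 5 ≤ n) (hodd : Odd (n - s))
    (X f1 f2 : ℝ)
    (hf1 : f1 = ((f ((n - s - 1 : ℕ) : ℝ≥0) : ℝ≥0) : ℝ))
    (hf2 : f2 = ((f ((n - s - 2 : ℕ) : ℝ≥0) : ℝ≥0) : ℝ))
    (hX : X = 2 * β / ((n : ℝ) - s - 1) - (1 - 2 / ((n : ℝ) - s - 1)) * f2) :
    X - Aval β f n (((n : ℝ) - s - 3) / 2) s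
        = 2 * (f1 - f2) * (f2 + β) * ((n : ℝ) - s - 3) /
            (((n : ℝ) - s - 1) * (f1 * ((n : ℝ) - s - 3) + 2 * f2 + β * ((n : ℝ) - s - 1))) ∧
      Aval β f n (((n : ℝ) - s - 3) / 2) s < X := by
  have hk : (5 : ℝ) ≤ (n : ℝ) - s := by
    have : ((s + 5 : ℕ) : ℝ) ≤ n := by exact_mod_cast h5
    push_cast at this
    linarith
  have h12 : f2 < f1 := by
    rw [hf1, hf2]
    have : ((n - s - 2 : ℕ) : ℝ≥0) < ((n - s - 1 : ℕ) : ℝ≥0) := by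
      exact_mod_cast (by omega : n - s - 2 < n - s - 1)
    exact_mod_cast hf this
  have h2 : 0 < f2 := by
    rw [hf2]
    have : (0 : ℝ≥0) < ((n - s - 2 : ℕ) : ℝ≥0) := by
      exact_mod_cast (by omega : 0 < n - s - 2)
    have h := hf this
    rw [hf0] at h
    exact_mod_cast h
  unfold Aval D1val D2val Tval
  rw [← hf1, ← hf2]
  generalize (n : ℝ) - s = k at *
  have hE : 0 < f1 * (k - 3) + 2 * f2 + β * (k - 1) := by
    have := mul_pos (h2.trans h12) (by linarith : 0 < k - 3)
    have := mul_nonneg hβ (by linarith : 0 ≤ k - 1)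
    linarith
  have hD : 0 < 3 * (f1 + β) - 2 * (f2 + β) := by linarith
  have hk1 : 0 < k - 1 := by linarith
  have hA : (f1 + β) * (f2 + β) / (3 * (f1 + β) - 2 * (f2 + β)) *
      (3 * (β - ((k - 3) * f1 - (k - 2) * f2)) /
        ((k - 3) / 2 * (3 * (f1 + β) - 2 * (f2 + β)) + k * (f2 + β)) - 1) + β
      = β - (k - 3) * (f1 + β) * (f2 + β) / (f1 * (k - 3) + 2 * f2 + β * (k - 1)) := by
    have e : (k - 3) / 2 * (3 * (f1 + β) - 2 * (f2 + β)) + k * (f2 + β)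
        = 3 / 2 * (f1 * (k - 3) + 2 * f2 + β * (k - 1)) := by ring
    have e2 : 3 * (β - ((k - 3) * f1 - (k - 2) * f2)) /
        (3 / 2 * (f1 * (k - 3) + 2 * f2 + β * (k - 1))) - 1
        = -((k - 3) * (3 * (f1 + β) - 2 * (f2 + β))) /
          (f1 * (k - 3) + 2 * f2 + β * (k - 1)) := by
      rw [div_sub_one (by positivity), div_eq_div_iff (by positivity) hE.ne']
      ring
    rw [e, e2, div_mul_div_comm]
    rw [show (f1 + β) * (f2 + β) * -((k - 3) * (3 * (f1 + β) - 2 * (f2 + β)))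
      = (3 * (f1 + β) - 2 * (f2 + β)) * -((k - 3) * (f1 + β) * (f2 + β)) by ring,
      mul_div_mul_left _ _ hD.ne']
    ring
  rw [hA]
  have key : X - (β - (k - 3) * (f1 + β) * (f2 + β) / (f1 * (k - 3) + 2 * f2 + β * (k - 1)))
      = 2 * (f1 - f2) * (f2 + β) * (k - 3) /
        ((k - 1) * (f1 * (k - 3) + 2 * f2 + β * (k - 1))) := by
    rw [hX]
    have hE0 := hE.ne'
    have hk0 := hk1.ne'
    clear hA hE
    generalize hEq : f1 * (k - 3) + 2 * f2 + β * (k - 1) = E at *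
    field_simp
    rw [← hEq]
    ring
  refine ⟨key, ?_⟩
  rw [← sub_pos, key]
  have : 0 < f1 - f2 := by linarith
  have : 0 < k - 3 := by linarith
  positivity
end
end

section
/- Let λ > 0, let f(x) = λ·x for all x ≥ 0, let β ≥ 0, set β̃ = β/λ, and let n ≥ 6 be a natural number. Define Ã(n,s) = λ·( 2(β̃−2)/(n−s) + 4 − (n−s) ) for 0 ≤ s ≤ n−2, B(s) = λ·( (β̃+1)/s − 1 ) for 1 ≤ s ≤ n, and Q̃(n,s) = Ã(n,s) if s = 0 or Ã(n,s) ≤ −λ, Q̃(n,s) = ( Ã(n,s)·B(s) − λ²·(n−s) )/( Ã(n,s) + B(s) + λ + λ(n−s) ) if 1 ≤ s ≤ n−2 and Ã(n,s) > −λ, and Q̃(n,n) = B(n). Then for every natural s with 2 ≤ s ≤ n−4, Q̃(n,s) > min( Q̃(n,0), Q̃(n,1), Q̃(n,n) ); in particular, the minimum of Q̃(n,·) over {0,1,…,n−4} ∪ {n} is attained at s = 0, s = 1, or s = n. -/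
/-- Closed form of the interior payoff. -/
theorem aux_form (lam b m s : ℝ) (hlam : 0 < lam) (hb : 0 ≤ b) (hm : 2 ≤ m) (hs : 0 < s)
    (hN : 0 < 2 * (b - 2) + 5 * m - m ^ 2) :
    ((lam * (2 * (b - 2) / m + 4 - m)) * (lam * ((b + 1) / s - 1)) - lam ^ 2 * m) /
      (lam * (2 * (b - 2) / m + 4 - m) + lam * ((b + 1) / s - 1) + lam + lam * m)
    = lam * ((b + 1) * (2 * (b - 2) + 5 * m - m ^ 2) /
      ((m + s) * (2 * (b - 2) + 5 * m - m ^ 2)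
        + m * ((m + s - 4) * m - (m + s - 6) - (b + 1))) - 1) := by
  have hm0 : 0 < m := by linarith
  have hD : (m + s) * (2 * (b - 2) + 5 * m - m ^ 2)
        + m * ((m + s - 4) * m - (m + s - 6) - (b + 1))
      = s * (2 * (b - 2) + 5 * m - m ^ 2) + m * (b + 1) + m * s * (m - 1) := by ring
  have hDpos : 0 < s * (2 * (b - 2) + 5 * m - m ^ 2) + m * (b + 1) + m * s * (m - 1) := by
    have h1 : 0 < m - 1 := by linarith
    positivity
  rw [hD]
  have hden : lam * (2 * (b - 2) / m + 4 - m) + lam * ((b + 1) / s - 1) + lam + lam * m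
      = lam * (s * (2 * (b - 2) + 5 * m - m ^ 2) + m * (b + 1) + m * s * (m - 1)) / (m * s) := by
    field_simp
    ring
  rw [hden]
  generalize hDD : s * (2 * (b - 2) + 5 * m - m ^ 2) + m * (b + 1) + m * s * (m - 1) = D at *
  have hne : D ≠ 0 := hDpos.ne'
  field_simp
  rw [← hDD]
  ring

/-- Positivity of the denominator. -/
theorem aux_pos (b m s : ℝ) (hb : 0 ≤ b) (hm : 2 ≤ m) (hs : 0 < s)
    (hN : 0 < 2 * (b - 2) + 5 * m - m ^ 2) :
    0 < (m + s) * (2 * (b - 2) + 5 * m - m ^ 2)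
        + m * ((m + s - 4) * m - (m + s - 6) - (b + 1)) := by
  have hD : (m + s) * (2 * (b - 2) + 5 * m - m ^ 2)
        + m * ((m + s - 4) * m - (m + s - 6) - (b + 1))
      = s * (2 * (b - 2) + 5 * m - m ^ 2) + m * (b + 1) + m * s * (m - 1) := by ring
  rw [hD]
  have h1 : 0 < m - 1 := by linarith
  have hm0 : 0 < m := by linarith
  positivity

theorem aux_sign (lam b m : ℝ) (hlam : 0 < lam) (hm : 0 < m) :
    lam * (2 * (b - 2) / m + 4 - m) ≤ -lam ↔ 2 * (b - 2) + 5 * m - m ^ 2 ≤ 0 := by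
  have h : lam * (2 * (b - 2) / m + 4 - m) + lam
      = lam / m * (2 * (b - 2) + 5 * m - m ^ 2) := by
    field_simp
    ring
  have hp : 0 < lam / m := by positivity
  constructor
  · intro h1
    by_contra h2
    push Not at h2
    have := mul_pos hp h2
    linarith
  · intro h1
    have := mul_nonpos_of_nonneg_of_nonpos hp.le h1
    linarith

theorem stmt19 (lam β : ℝ) (hlam : 0 < lam) (hβ : 0 ≤ β)
    (f : ℝ → ℝ) (hf : ∀ x : ℝ, f x = lam * x)
    (βt : ℝ) (hβt : βt = β / lam)
    (n : ℕ) (hn : 6 ≤ n)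
    (Atil B Qtil : ℕ → ℝ)
    (hA : ∀ s : ℕ, Atil s = lam * (2 * (βt - 2) / ((n : ℝ) - s) + 4 - ((n : ℝ) - s)))
    (hB : ∀ s : ℕ, B s = lam * ((βt + 1) / (s : ℝ) - 1))
    (hQ : ∀ s : ℕ, Qtil s =
      if s = 0 ∨ Atil s ≤ -lam then Atil s
      else if s + 2 ≤ n then
        (Atil s * B s - lam ^ 2 * ((n : ℝ) - s)) /
          (Atil s + B s + lam + lam * ((n : ℝ) - s))
      else B n) :
    (∀ s : ℕ, 2 ≤ s → s + 4 ≤ n →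
      min (Qtil 0) (min (Qtil 1) (Qtil n)) < Qtil s) ∧
    ∃ s₀ : ℕ, (s₀ = 0 ∨ s₀ = 1 ∨ s₀ = n) ∧
      ∀ s : ℕ, (s + 4 ≤ n ∨ s = n) → Qtil s₀ ≤ Qtil s := by
  have hb : 0 ≤ βt := by rw [hβt]; positivity
  have hnR : (6 : ℝ) ≤ n := by exact_mod_cast hn
  have hQn : Qtil n = B n := by
    rw [hQ, if_neg, if_neg (by omega)]
    rintro (h | h)
    · omega
    · rw [hA] at h
      simp only [sub_self, div_zero] at h
      linarith
  have hQ0 : Qtil 0 = Atil 0 := by rw [hQ]; simp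
  have hform : ∀ s : ℕ, 1 ≤ s → s + 2 ≤ n →
      0 < 2 * (βt - 2) + 5 * ((n : ℝ) - s) - ((n : ℝ) - s) ^ 2 →
      Qtil s = lam * ((βt + 1) * (2 * (βt - 2) + 5 * ((n : ℝ) - s) - ((n : ℝ) - s) ^ 2) /
      ((n : ℝ) * (2 * (βt - 2) + 5 * ((n : ℝ) - s) - ((n : ℝ) - s) ^ 2)
        + ((n : ℝ) - s) * (((n : ℝ) - 4) * ((n : ℝ) - s) - ((n : ℝ) - 6) - (βt + 1))) - 1) ∧
      0 < ((n : ℝ) * (2 * (βt - 2) + 5 * ((n : ℝ) - s) - ((n : ℝ) - s) ^ 2)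
        + ((n : ℝ) - s) * (((n : ℝ) - 4) * ((n : ℝ) - s) - ((n : ℝ) - 6) - (βt + 1))) := by
    intro s h1 h2 hN
    have h1R : (1 : ℝ) ≤ s := by exact_mod_cast h1
    have h2R : (s : ℝ) + 2 ≤ n := by exact_mod_cast h2
    have hm : (2 : ℝ) ≤ (n : ℝ) - s := by linarith
    have e := aux_form lam βt ((n : ℝ) - s) s hlam hb hm (by linarith) hN
    have p := aux_pos βt ((n : ℝ) - s) s hb hm (by linarith) hN
    rw [sub_add_cancel] at e p
    refine ⟨?_, p⟩
    rw [hQ, if_neg, if_pos h2, hA, hB, e]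
    rintro (h | h)
    · omega
    · rw [hA, aux_sign _ _ _ hlam (by linarith)] at h
      linarith
  have hlow : ∀ s : ℕ, s + 2 ≤ n →
      2 * (βt - 2) + 5 * ((n : ℝ) - s) - ((n : ℝ) - s) ^ 2 ≤ 0 →
      Qtil s = Atil s ∧ Atil s ≤ -lam := by
    intro s h2 hN
    have h2R : (s : ℝ) + 2 ≤ n := by exact_mod_cast h2
    have h : Atil s ≤ -lam := by
      rw [hA, aux_sign _ _ _ hlam (by linarith)]; exact hN
    exact ⟨by rw [hQ, if_pos (Or.inr h)], h⟩
  have main : ∀ s : ℕ, 2 ≤ s → s + 4 ≤ n →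
      min (Qtil 0) (min (Qtil 1) (Qtil n)) < Qtil s := by
    intro s hs2 hs4
    have h2R : (2 : ℝ) ≤ s := by exact_mod_cast hs2
    have h4R : (s : ℝ) + 4 ≤ n := by exact_mod_cast hs4
    obtain ⟨m, hmdef⟩ : ∃ m : ℝ, m = (n : ℝ) - s := ⟨_, rfl⟩
    have hm4 : 4 ≤ m := by linarith
    have hmn : m + 2 ≤ n := by linarith
    rcases le_or_gt (2 * (βt - 2) + 5 * ((n : ℝ) - s) - ((n : ℝ) - s) ^ 2) 0 with hN | hN
    · -- the payoff is A(s), larger than A(0)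
      apply min_lt_of_left_lt
      rw [hQ0, (hlow s (by omega) hN).1, hA, hA]
      apply mul_lt_mul_of_pos_left _ hlam
      rw [← hmdef]
      simp only [Nat.cast_zero, sub_zero]
      have e : (2 * (βt - 2) / m + 4 - m) - (2 * (βt - 2) / n + 4 - n)
          = (n - m) * (2 * (βt - 2) + m * n) / (m * n) := by
        field_simp
        ring
      have : 0 < (n - m) * (2 * (βt - 2) + m * n) / (m * n) := by
        have i1 : 0 < (n : ℝ) - m := by linarith
        have i2 : 0 < 2 * (βt - 2) + m * n := by nlinarith
        positivity
      linarith
    · apply min_lt_of_right_lt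
      obtain ⟨e, p⟩ := hform s (by omega) (by omega) hN
      rw [← hmdef] at e p hN
      have hc : 0 < βt + 1 := by linarith
      rcases le_or_gt (2 * (βt - 2) + 5 * ((n : ℝ) - (1 : ℕ)) - ((n : ℝ) - (1 : ℕ)) ^ 2) 0
        with hN1 | hN1
      · apply min_lt_of_left_lt
        obtain ⟨e1, l1⟩ := hlow 1 (by omega) hN1
        rw [e1, e]
        have := mul_pos hlam (div_pos (mul_pos hc hN) p)
        linarith
      · obtain ⟨e1, p1⟩ := hform 1 (by omega) (by omega) hN1
        obtain ⟨r, hr⟩ : ∃ r : ℝ, r = (n : ℝ) - (1 : ℕ) := ⟨_, rfl⟩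
        rw [← hr] at e1 p1 hN1
        have hr' : r = n - 1 := by rw [hr]; simp
        rcases lt_or_ge (((n : ℝ) - 4) * m - ((n : ℝ) - 6) - (βt + 1)) 0 with hK | hK
        · apply min_lt_of_right_lt
          rw [hQn, hB, e]
          apply mul_lt_mul_of_pos_left _ hlam
          apply sub_lt_sub_right
          rw [div_lt_div_iff₀ (by linarith) p]
          have : m * (((n : ℝ) - 4) * m - ((n : ℝ) - 6) - (βt + 1)) < 0 :=
            mul_neg_of_pos_of_neg (by linarith) hK
          nlinarith [mul_neg_of_pos_of_neg hc this]
        · apply min_lt_of_left_lt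
          rw [e1, e]
          apply mul_lt_mul_of_pos_left _ hlam
          apply sub_lt_sub_right
          rw [div_lt_div_iff₀ p1 p]
          have hmr : m < r := by linarith
          have hKK : ((n : ℝ) - 4) * m - ((n : ℝ) - 6) - (βt + 1)
              < ((n : ℝ) - 4) * r - ((n : ℝ) - 6) - (βt + 1) := by
            have := mul_lt_mul_of_pos_left hmr (show 0 < (n : ℝ) - 4 by linarith)
            linarith
          have hNN : 2 * (βt - 2) + 5 * r - r ^ 2 < 2 * (βt - 2) + 5 * m - m ^ 2 := by
            have := mul_pos (show 0 < r - m by linarith) (show 0 < r + m - 5 by linarith)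
            nlinarith
          generalize 2 * (βt - 2) + 5 * r - r ^ 2 = N1 at *
          generalize 2 * (βt - 2) + 5 * m - m ^ 2 = N at *
          generalize ((n : ℝ) - 4) * m - ((n : ℝ) - 6) - (βt + 1) = K at *
          generalize ((n : ℝ) - 4) * r - ((n : ℝ) - 6) - (βt + 1) = K1 at *
          have a1 : m * K < r * K1 := by
            apply mul_lt_mul'' hmr hKK (by linarith) hK
          have a2 : N1 * (m * K) < N * (r * K1) := by
            apply mul_lt_mul'' hNN a1 hN1.le (mul_nonneg (by linarith) hK)
          have a3 := mul_lt_mul_of_pos_left a2 hc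
          linarith
  refine ⟨main, ?_⟩
  obtain ⟨s₀, h0, hmin⟩ : ∃ s₀ : ℕ, (s₀ = 0 ∨ s₀ = 1 ∨ s₀ = n) ∧
      Qtil s₀ = min (Qtil 0) (min (Qtil 1) (Qtil n)) := by
    rcases min_choice (Qtil 0) (min (Qtil 1) (Qtil n)) with h | h
    · exact ⟨0, Or.inl rfl, h.symm⟩
    · rcases min_choice (Qtil 1) (Qtil n) with h' | h'
      · exact ⟨1, Or.inr (Or.inl rfl), by rw [h, h']⟩
      · exact ⟨n, Or.inr (Or.inr rfl), by rw [h, h']⟩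
  refine ⟨s₀, h0, ?_⟩
  intro s hs
  rw [hmin]
  rcases hs with hs | rfl
  · rcases Nat.lt_or_ge s 2 with h | h
    · interval_cases s
      · exact min_le_left _ _
      · exact (min_le_right _ _).trans (min_le_left _ _)
    · exact (main s h hs).le
  · exact (min_le_right _ _).trans (min_le_right _ _)
end
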